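/- arXiv:2407.10659 — 4 statements merged into one kernel-verified Lean document; each statement's English description precedes it below -/
import Mathlib

section
/- (Theorem 1 of the paper.) Let T > 0 and Z : ℝ → ℝ. Then Z is rough in the sense of Definition 1 (i.e., there exists τ < 1 such that R_n(Z) converges subsequentially to τ) if and only if there exists ρ < 0 such that ρ_n(Z) converges subsequentially to ρ. Moreover, in that case the two limits are related by ρ = τ − 1. -/
open Filter

noncomputable section

/-- Extension of `Z : ℝ → ℝ` by the conventions `Z t := Z 0` for `t < 0` and
`Z t := Z T` for `t > T`. -/
def Zext (T : ℝ) (Z : ℝ → ℝ) (t : ℝ) : ℝ :=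
  if t < 0 then Z 0 else if T < t then Z T else Z t

/-- Realized variance `RV^n_T(Z) = Σ_{i=1}^n (Z(iT/n) − Z((i−1)T/n))²`. -/
def RV (T : ℝ) (Z : ℝ → ℝ) (n : ℕ) : ℝ :=
  ∑ i ∈ Finset.Icc 1 n,
    (Zext T Z ((i : ℝ) * T / (n : ℝ)) - Zext T Z (((i : ℝ) - 1) * T / (n : ℝ))) ^ 2

/-- Coarse realized variance
`RV^{n,2}_T(Z) = (1/2) Σ_{i=0}^n (Z((i+1)T/n) − Z((i−1)T/n))²`. -/
def RV2 (T : ℝ) (Z : ℝ → ℝ) (n : ℕ) : ℝ :=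
  (1 / 2) * ∑ i ∈ Finset.range (n + 1),
    (Zext T Z (((i : ℝ) + 1) * T / (n : ℝ)) - Zext T Z (((i : ℝ) - 1) * T / (n : ℝ))) ^ 2

/-- The first-order autocovariance sum
`Σ_{i=1}^{n−1} (Z((i+1)T/n) − Z(iT/n))·(Z(iT/n) − Z((i−1)T/n))`. -/
def crossSum (T : ℝ) (Z : ℝ → ℝ) (n : ℕ) : ℝ :=
  ∑ i ∈ Finset.Icc 1 (n - 1),
    (Zext T Z (((i : ℝ) + 1) * T / (n : ℝ)) - Zext T Z ((i : ℝ) * T / (n : ℝ))) *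
      (Zext T Z ((i : ℝ) * T / (n : ℝ)) - Zext T Z (((i : ℝ) - 1) * T / (n : ℝ)))

/-- Variance ratio `R_n(Z) = RV^{n,2}_T(Z)/RV^n_T(Z)`, with the convention `0/0 := 2`
(note that `RV^n_T(Z) = 0` forces `RV^{n,2}_T(Z) = 0`). -/
def Rratio (T : ℝ) (Z : ℝ → ℝ) (n : ℕ) : ℝ :=
  if RV T Z n = 0 then 2 else RV2 T Z n / RV T Z n

/-- First-order sample autocorrelation `ρ_n(Z)` with the convention `0/0 := 1`
(note that `RV^n_T(Z) = 0` forces the numerator to vanish). -/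
def acf (T : ℝ) (Z : ℝ → ℝ) (n : ℕ) : ℝ :=
  if RV T Z n = 0 then 1 else crossSum T Z n / RV T Z n

/-- A real sequence `a` converges *subsequentially* to `l` if every subsequence has a
further subsequence converging to `l`. -/
def SubseqTendsto (a : ℕ → ℝ) (l : ℝ) : Prop :=
  ∀ φ : ℕ → ℕ, StrictMono φ →
    ∃ ψ : ℕ → ℕ, StrictMono ψ ∧ Tendsto (a ∘ φ ∘ ψ) atTop (nhds l)

/-- `Z` is rough (Definition 1): there exists `τ < 1` such that the variance ratio `R_n(Z)`
converges subsequentially to `τ`. -/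
def IsRough (T : ℝ) (Z : ℝ → ℝ) : Prop :=
  ∃ τ : ℝ, τ < 1 ∧ SubseqTendsto (fun n => Rratio T Z n) τ

theorem aux_sum (d : ℕ → ℝ) (h0 : d 0 = 0) (m : ℕ) :
    (1 / 2) * ∑ i ∈ Finset.range (m + 1), (d (i + 1) + d i) ^ 2
      = ∑ i ∈ Finset.Icc 1 (m + 1), d i ^ 2 + ∑ i ∈ Finset.Icc 1 m, d (i + 1) * d i
        - (1 / 2) * d (m + 1) ^ 2 := by
  induction m with
  | zero => simp [h0]; ring
  | succ k ih =>
    rw [Finset.sum_range_succ, mul_add, ih, Finset.sum_Icc_succ_top (by omega : 1 ≤ k + 1 + 1),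
      Finset.sum_Icc_succ_top (by omega : 1 ≤ k + 1) (fun i => d (i + 1) * d i)]
    ring

theorem RV2_eq (T : ℝ) (hT : 0 < T) (Z : ℝ → ℝ) (m : ℕ) :
    RV2 T Z (m + 1) = RV T Z (m + 1) + crossSum T Z (m + 1) := by
  have hN : (0 : ℝ) < ((m + 1 : ℕ) : ℝ) := by positivity
  obtain ⟨N, hNe⟩ : ∃ N : ℝ, N = ((m + 1 : ℕ) : ℝ) := ⟨_, rfl⟩
  have hm : N = (m : ℝ) + 1 := by rw [hNe]; push_cast; ring
  rw [← hNe] at hN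
  let d : ℕ → ℝ := fun i => Zext T Z ((i : ℝ) * T / N) - Zext T Z (((i : ℝ) - 1) * T / N)
  have h0 : d 0 = 0 := by
    have h1 : ((0 : ℝ) - 1) * T / N < 0 := div_neg_of_neg_of_pos (by linarith) hN
    have h2 : Zext T Z (((0 : ℝ) - 1) * T / N) = Z 0 := by rw [Zext, if_pos h1]
    have h3 : Zext T Z 0 = Z 0 := by simp [Zext, hT.le]
    simp only [d, Nat.cast_zero]
    rw [h2, zero_mul, zero_div, h3, sub_self]
  have hl : d (m + 2) = 0 := by
    have e1 : (((m + 2 : ℕ) : ℝ) - 1) * T / N = T := by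
      rw [div_eq_iff hN.ne', hm]; push_cast; ring
    have e2 : T < ((m + 2 : ℕ) : ℝ) * T / N := by
      rw [lt_div_iff₀ hN, hm]; push_cast; nlinarith
    simp only [d]
    rw [e1, Zext, Zext, if_neg (by linarith), if_pos e2, if_neg (by linarith), if_neg (lt_irrefl _),
      sub_self]
  have key := aux_sum d h0 (m + 1)
  rw [hl, Finset.sum_Icc_succ_top (by omega : 1 ≤ m + 1 + 1), hl,
    Finset.sum_Icc_succ_top (by omega : 1 ≤ m + 1) (fun i => d (i + 1) * d i), hl] at key
  have k1 : RV2 T Z (m + 1) = (1 / 2) * ∑ i ∈ Finset.range (m + 1 + 1), (d (i + 1) + d i) ^ 2 := by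
    unfold RV2
    rw [← hNe]
    congr 1
    refine Finset.sum_congr rfl fun i _ => ?_
    simp only [d]
    push_cast
    rw [add_sub_cancel_right]
    ring
  have k2 : RV T Z (m + 1) = ∑ i ∈ Finset.Icc 1 (m + 1), d i ^ 2 := by
    unfold RV
    rw [← hNe]
  have k3 : crossSum T Z (m + 1) = ∑ i ∈ Finset.Icc 1 m, d (i + 1) * d i := by
    unfold crossSum
    rw [← hNe, Nat.add_sub_cancel]
    refine Finset.sum_congr rfl fun i _ => ?_
    simp only [d]
    push_cast
    rw [add_sub_cancel_right]
  rw [k1, k2, k3, key]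
  ring

theorem Rratio_eq (T : ℝ) (hT : 0 < T) (Z : ℝ → ℝ) (n : ℕ) :
    Rratio T Z n = acf T Z n + 1 := by
  unfold Rratio acf
  split_ifs with h
  · norm_num
  · cases n with
    | zero => exact absurd (by simp [RV]) h
    | succ m =>
      rw [RV2_eq T hT Z m]
      field_simp
      ring

theorem SubseqTendsto.shift {a : ℕ → ℝ} {l : ℝ} (h : SubseqTendsto a l) (c : ℝ) :
    SubseqTendsto (fun n => a n + c) (l + c) := by
  intro φ hφ
  obtain ⟨ψ, hψ, ht⟩ := h φ hφ
  exact ⟨ψ, hψ, ht.add_const c⟩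

theorem SubseqTendsto.uniq {a : ℕ → ℝ} {l k : ℝ} (h : SubseqTendsto a l)
    (h' : SubseqTendsto a k) : l = k := by
  obtain ⟨ψ, hψ, ht⟩ := h id strictMono_id
  obtain ⟨χ, hχ, ht'⟩ := h' ψ hψ
  exact tendsto_nhds_unique (ht.comp hχ.tendsto_atTop) ht'

/-- Theorem 1 of the paper: `Z` is rough if and only if there exists `ρ < 0`
such that `ρ_n(Z)` converges subsequentially to `ρ`; moreover the two limits are related by
`ρ = τ − 1`. -/
theorem stmt2 (T : ℝ) (hT : 0 < T) (Z : ℝ → ℝ) :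
    (IsRough T Z ↔ ∃ ρ : ℝ, ρ < 0 ∧ SubseqTendsto (fun n => acf T Z n) ρ) ∧
    (∀ τ ρ : ℝ, SubseqTendsto (fun n => Rratio T Z n) τ →
      SubseqTendsto (fun n => acf T Z n) ρ → ρ = τ - 1) := by
  have hR : (fun n => Rratio T Z n) = fun n => acf T Z n + 1 :=
    funext (Rratio_eq T hT Z)
  have hA : (fun n => acf T Z n) = fun n => Rratio T Z n + (-1) := by
    funext n
    rw [Rratio_eq T hT Z n]
    ring
  refine ⟨⟨?_, ?_⟩, ?_⟩
  · rintro ⟨τ, hτ, h⟩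
    refine ⟨τ + (-1), by linarith, ?_⟩
    rw [hA]
    exact h.shift (-1)
  · rintro ⟨ρ, hρ, h⟩
    refine ⟨ρ + 1, by linarith, ?_⟩
    rw [hR]
    exact h.shift 1
  · intro τ ρ h1 h2
    have h3 := h1.shift (-1)
    rw [← hA] at h3
    have := h2.uniq h3
    linarith
end
end

section
/- Let T > 0 and let Z : ℝ → ℝ be such that the restriction of Z to [0, T] is continuously differentiable (C¹ on [0, T]). Then the variance ratio converges to 2: R_n(Z) → 2 as n → ∞. -/
open Filter

noncomputable section

def dinc (T : ℝ) (Z : ℝ → ℝ) (n i : ℕ) : ℝ :=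
  Zext T Z ((i : ℝ) * T / (n : ℝ)) - Zext T Z (((i : ℝ) - 1) * T / (n : ℝ))

lemma Zext_in {T : ℝ} {Z : ℝ → ℝ} {t : ℝ} (h0 : 0 ≤ t) (h1 : t ≤ T) : Zext T Z t = Z t := by
  simp [Zext, not_lt.mpr h0, not_lt.mpr h1]

lemma dinc_zero {T : ℝ} (hT : 0 < T) (Z : ℝ → ℝ) {n : ℕ} (hn : 0 < n) : dinc T Z n 0 = 0 := by
  have hn' : (0 : ℝ) < n := by exact_mod_cast hn
  have h : ((0 : ℝ) - 1) * T / n < 0 := by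
    apply div_neg_of_neg_of_pos _ hn'
    linarith
  simp only [dinc, Nat.cast_zero]
  rw [show Zext T Z ((0 - 1) * T / (n : ℝ)) = Z 0 by simp only [Zext, if_pos h]]
  rw [Zext_in (by simp) (by simp [hT.le])]
  simp

lemma dinc_last {T : ℝ} (hT : 0 < T) (Z : ℝ → ℝ) {n : ℕ} (hn : 0 < n) :
    dinc T Z n (n + 1) = 0 := by
  have hn' : (0 : ℝ) < n := by exact_mod_cast hn
  have h : T < ((n : ℝ) + 1) * T / n := by
    rw [lt_div_iff₀ hn']
    linarith
  have h2 : ((n : ℝ) + 1 - 1) * T / n = T := by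
    field_simp
    ring
  simp only [dinc, Nat.cast_add, Nat.cast_one]
  rw [h2, Zext_in hT.le le_rfl]
  simp only [Zext, if_pos h, if_neg (not_lt.mpr (hT.le.trans h.le)), sub_self]

lemma RV_eq (T : ℝ) (Z : ℝ → ℝ) (n : ℕ) :
    RV T Z n = ∑ i ∈ Finset.range n, dinc T Z n (i + 1) ^ 2 := by
  rw [Finset.range_eq_Ico, Finset.sum_Ico_add' (fun i => dinc T Z n i ^ 2) 0 n 1]
  rfl

lemma key_id {T : ℝ} (hT : 0 < T) (Z : ℝ → ℝ) {n : ℕ} (hn : 0 < n) :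
    2 * RV T Z n - RV2 T Z n =
      (1 / 2) * ∑ i ∈ Finset.range (n + 1), (dinc T Z n (i + 1) - dinc T Z n i) ^ 2 := by
  have e1 : RV T Z n = ∑ i ∈ Finset.range (n + 1), dinc T Z n (i + 1) ^ 2 := by
    rw [Finset.sum_range_succ, dinc_last hT Z hn, RV_eq]; simp
  have e2 : RV T Z n = ∑ i ∈ Finset.range (n + 1), dinc T Z n i ^ 2 := by
    rw [Finset.sum_range_succ', dinc_zero hT Z hn, RV_eq]; simp
  have e3 : RV2 T Z n =
      (1 / 2) * ∑ i ∈ Finset.range (n + 1), (dinc T Z n (i + 1) + dinc T Z n i) ^ 2 := by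
    simp only [RV2, dinc, Nat.cast_add, Nat.cast_one, add_sub_cancel_right]
    congr 1
    apply Finset.sum_congr rfl
    intro i _
    ring
  have e4 : 2 * RV T Z n = ∑ i ∈ Finset.range (n + 1), dinc T Z n (i + 1) ^ 2 +
      ∑ i ∈ Finset.range (n + 1), dinc T Z n i ^ 2 := by
    rw [← e1, ← e2]; ring
  rw [e4, e3, Finset.mul_sum, Finset.mul_sum, ← Finset.sum_add_distrib, ← Finset.sum_sub_distrib]
  apply Finset.sum_congr rfl
  intro i _
  ring

lemma dinc_mvt {T : ℝ} (hT : 0 < T) {Z : ℝ → ℝ} (hZ : ContDiffOn ℝ 1 Z (Set.Icc 0 T))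
    {n i : ℕ} (hi : i < n) :
    ∃ c ∈ Set.Icc 0 T, (i : ℝ) * T / n < c ∧ c < ((i : ℝ) + 1) * T / n ∧
      dinc T Z n (i + 1) = derivWithin Z (Set.Icc 0 T) c * (T / n) := by
  have hn' : (0 : ℝ) < n := by exact_mod_cast (Nat.zero_le i).trans_lt hi
  have hi' : (i : ℝ) + 1 ≤ n := by exact_mod_cast hi
  have ha : 0 ≤ (i : ℝ) * T / n := by positivity
  have hb : ((i : ℝ) + 1) * T / n ≤ T := by
    rw [div_le_iff₀ hn']
    nlinarith
  have hab : (i : ℝ) * T / n < ((i : ℝ) + 1) * T / n := by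
    gcongr
    linarith
  obtain ⟨c, hc, h⟩ := exists_hasDerivAt_eq_slope Z (derivWithin Z (Set.Icc 0 T)) hab
    (hZ.continuousOn.mono (Set.Icc_subset_Icc ha hb)) (fun x hx => by
      have hx0 : 0 < x := ha.trans_lt hx.1
      have hxT : x < T := hx.2.trans_le hb
      exact ((hZ.differentiableOn (by norm_num) x ⟨hx0.le, hxT.le⟩).hasDerivWithinAt).hasDerivAt
        (Icc_mem_nhds hx0 hxT))
  refine ⟨c, ⟨ha.trans hc.1.le, hc.2.le.trans hb⟩, hc.1, hc.2, ?_⟩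
  rw [h]
  simp only [dinc, Nat.cast_add, Nat.cast_one, add_sub_cancel_right]
  rw [Zext_in (ha.trans hab.le) hb, Zext_in ha (hab.le.trans hb)]
  have : ((i : ℝ) + 1) * T / n - (i : ℝ) * T / n = T / n := by ring
  rw [this]
  field_simp

lemma diff_bound {T : ℝ} (hT : 0 < T) {Z : ℝ → ℝ} (hZ : ContDiffOn ℝ 1 Z (Set.Icc 0 T)) :
    Tendsto (fun n : ℕ => (n : ℝ) *
      ∑ i ∈ Finset.range (n + 1), (dinc T Z n (i + 1) - dinc T Z n i) ^ 2) atTop (nhds 0) := by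
  have hg : ContinuousOn (derivWithin Z (Set.Icc 0 T)) (Set.Icc 0 T) :=
    hZ.continuousOn_derivWithin (uniqueDiffOn_Icc hT) le_rfl
  obtain ⟨M, hM⟩ := isCompact_Icc.exists_bound_of_continuousOn hg
  have hu := isCompact_Icc.uniformContinuousOn_of_continuous hg
  rw [Metric.uniformContinuousOn_iff] at hu
  have main : ∀ ε > 0, ∀ᶠ n : ℕ in atTop, (n : ℝ) *
      ∑ i ∈ Finset.range (n + 1), (dinc T Z n (i + 1) - dinc T Z n i) ^ 2 ≤
        T ^ 2 * ε ^ 2 + 2 * M ^ 2 * T ^ 2 / n := by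
    intro ε hε
    obtain ⟨δ, hδ, hu⟩ := hu ε hε
    have ht : Tendsto (fun n : ℕ => (2 * T) / (n : ℝ)) atTop (nhds 0) :=
      tendsto_const_div_atTop_nhds_zero_nat _
    filter_upwards [eventually_gt_atTop 0, ht.eventually (gt_mem_nhds hδ)] with n hn hnδ
    have hn' : (0 : ℝ) < n := by exact_mod_cast hn
    have hb : ∀ i < n, dinc T Z n (i + 1) ^ 2 ≤ M ^ 2 * (T / n) ^ 2 := by
      intro i hi
      obtain ⟨c, hc, -, -, h⟩ := dinc_mvt hT hZ hi
      rw [h, mul_pow]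
      gcongr ?_ * _
      have := hM c hc
      rw [Real.norm_eq_abs] at this
      exact sq_le_sq' (abs_le.mp this).1 (abs_le.mp this).2
    obtain ⟨m, rfl⟩ : ∃ m, n = m + 1 := ⟨n - 1, by omega⟩
    have hmid : ∀ i ∈ Finset.range m,
        (dinc T Z (m + 1) (i + 1 + 1) - dinc T Z (m + 1) (i + 1)) ^ 2 ≤
          ε ^ 2 * (T / (m + 1 : ℕ)) ^ 2 := by
      intro i hi
      rw [Finset.mem_range] at hi
      obtain ⟨c, hc, hc1, hc2, h⟩ := dinc_mvt hT hZ (show i < m + 1 by omega)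
      obtain ⟨c', hc', hc1', hc2', h'⟩ := dinc_mvt hT hZ (show i + 1 < m + 1 by omega)
      rw [h, h', ← sub_mul, mul_pow]
      gcongr ?_ * _
      have hd : dist c' c < δ := by
        rw [Real.dist_eq, abs_lt]
        push_cast at *
        have e : ((i : ℝ) + 1 + 1) * T / (m + 1) = i * T / (m + 1) + 2 * T / (m + 1) := by ring
        constructor <;> linarith
      have := hu c' hc' c hc hd
      rw [Real.dist_eq, abs_lt] at this
      exact sq_le_sq' this.1.le this.2.le
    have hs := Finset.sum_le_sum hmid
    rw [Finset.sum_const, Finset.card_range, nsmul_eq_mul] at hs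
    rw [Finset.sum_range_succ, Finset.sum_range_succ', dinc_last hT Z hn, dinc_zero hT Z hn]
    have h0 := hb 0 hn
    have h1 := hb m (by omega)
    have hmm : (m : ℝ) * (ε ^ 2 * (T / (m + 1 : ℕ)) ^ 2) ≤
        ((m + 1 : ℕ) : ℝ) * (ε ^ 2 * (T / (m + 1 : ℕ)) ^ 2) := by
      gcongr; omega
    calc _ ≤ ((m + 1 : ℕ) : ℝ) * (((m + 1 : ℕ) : ℝ) * (ε ^ 2 * (T / (m + 1 : ℕ)) ^ 2) +
          2 * (M ^ 2 * (T / (m + 1 : ℕ)) ^ 2)) := by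
          apply mul_le_mul_of_nonneg_left _ hn'.le
          linarith
      _ = _ := by
          field_simp
  rw [Metric.tendsto_nhds]
  intro η hη
  have hε : 0 < Real.sqrt (η / 2) / T := by positivity
  have ht : Tendsto (fun n : ℕ => (2 * M ^ 2 * T ^ 2) / (n : ℝ)) atTop (nhds 0) :=
    tendsto_const_div_atTop_nhds_zero_nat _
  filter_upwards [main _ hε, ht.eventually (gt_mem_nhds (half_pos hη))] with n h1 h2
  have h3 : T ^ 2 * (Real.sqrt (η / 2) / T) ^ 2 = η / 2 := by
    rw [div_pow, Real.sq_sqrt (by positivity)]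
    field_simp
  rw [Real.dist_eq, sub_zero, abs_of_nonneg (by positivity)]
  linarith

lemma RV_lower {T : ℝ} (hT : 0 < T) {Z : ℝ → ℝ} (hZ : ContinuousOn Z (Set.Icc 0 T))
    {s : ℝ} (hs : s ∈ Set.Icc 0 T) (hne : Z s ≠ Z 0) :
    ∃ δ > 0, ∀ᶠ n : ℕ in atTop, δ ≤ n * RV T Z n := by
  have hd : 0 < (Z s - Z 0) ^ 2 := by
    have := sub_ne_zero.mpr hne
    positivity
  refine ⟨(Z s - Z 0) ^ 2 / 2, by positivity, ?_⟩
  have hst : 0 ≤ s / T := div_nonneg hs.1 hT.le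
  have hk : Tendsto (fun n : ℕ => ((⌊s / T * (n : ℝ)⌋₊ : ℝ) / n) * T) atTop (nhds (s / T * T)) :=
    ((tendsto_nat_floor_mul_div_atTop hst).comp tendsto_natCast_atTop_atTop).mul_const T
  rw [div_mul_cancel₀ _ hT.ne'] at hk
  have hle : ∀ n : ℕ, ⌊s / T * (n : ℝ)⌋₊ ≤ n := by
    intro n
    apply Nat.floor_le_of_le
    have : s / T ≤ 1 := (div_le_one hT).mpr hs.2
    nlinarith [(Nat.cast_nonneg n : (0 : ℝ) ≤ n)]
  have hin : ∀ n : ℕ, ((⌊s / T * (n : ℝ)⌋₊ : ℝ) / n) * T ∈ Set.Icc 0 T := by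
    intro n
    refine ⟨by positivity, ?_⟩
    have h1 : ((⌊s / T * (n : ℝ)⌋₊ : ℝ) / n) ≤ 1 :=
      div_le_one_of_le₀ (by exact_mod_cast hle n) (by positivity)
    nlinarith
  have hk2 : Tendsto (fun n : ℕ => ((⌊s / T * (n : ℝ)⌋₊ : ℝ) / n) * T) atTop
      (nhdsWithin s (Set.Icc 0 T)) :=
    tendsto_nhdsWithin_iff.mpr ⟨hk, Eventually.of_forall hin⟩
  have hlim := (((hZ s hs).tendsto.comp hk2).sub_const (Z 0)).pow 2
  filter_upwards [hlim.eventually (lt_mem_nhds (half_lt_self hd)), eventually_gt_atTop 0]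
    with n h hn
  set k := ⌊s / T * (n : ℝ)⌋₊ with hkdef
  have htel : ∑ i ∈ Finset.range k, dinc T Z n (i + 1) = Z ((k : ℝ) / n * T) - Z 0 := by
    have := Finset.sum_range_sub (fun i : ℕ => Zext T Z ((i : ℝ) * T / n)) k
    simp only [dinc]
    push_cast at this ⊢
    simp only [add_sub_cancel_right]
    rw [this, show (k : ℝ) * T / n = k / n * T by ring, Zext_in (hin n).1 (hin n).2]
    rw [Zext_in (by simp) (by simp [hT.le])]
    simp [hkdef]
  have hcs := sq_sum_le_card_mul_sum_sq (s := Finset.range k) (f := fun i => dinc T Z n (i + 1))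
  rw [htel, Finset.card_range] at hcs
  have hmono : ∑ i ∈ Finset.range k, dinc T Z n (i + 1) ^ 2 ≤ RV T Z n := by
    rw [RV_eq]
    apply Finset.sum_le_sum_of_subset_of_nonneg
    · exact Finset.range_mono (hle n)
    · intros; positivity
  have hkn : (k : ℝ) ≤ n := by exact_mod_cast hle n
  calc _ ≤ (Z ((k : ℝ) / n * T) - Z 0) ^ 2 := h.le
    _ ≤ _ := hcs
    _ ≤ _ := by gcongr

/-- if the restriction of `Z` to `[0, T]` is continuously differentiable,
then the variance ratio converges to `2`: `R_n(Z) → 2` as `n → ∞`. -/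
theorem stmt3 (T : ℝ) (hT : 0 < T) (Z : ℝ → ℝ)
    (hZ : ContDiffOn ℝ 1 Z (Set.Icc 0 T)) :
    Tendsto (fun n : ℕ => Rratio T Z n) atTop (nhds 2) := by
  by_cases hc : ∀ s ∈ Set.Icc 0 T, Z s = Z 0
  · have hz : ∀ t, Zext T Z t = Z 0 := by
      intro t
      unfold Zext
      split_ifs with h1 h2
      · rfl
      · exact hc T ⟨hT.le, le_rfl⟩
      · exact hc t ⟨not_lt.mp h1, not_lt.mp h2⟩
    have : (fun n : ℕ => Rratio T Z n) = fun _ => 2 := by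
      funext n
      simp [Rratio, RV, hz]
    rw [this]
    exact tendsto_const_nhds
  · push Not at hc
    obtain ⟨s, hs, hne⟩ := hc
    obtain ⟨δ, hδ, hlow⟩ := RV_lower hT hZ.continuousOn hs hne
    have hb := (diff_bound hT hZ).div_const (2 * δ)
    rw [zero_div] at hb
    rw [tendsto_iff_dist_tendsto_zero]
    refine squeeze_zero' (Eventually.of_forall fun n => dist_nonneg) ?_ hb
    filter_upwards [hlow, eventually_gt_atTop 0] with n hn hn0
    have hn' : (0 : ℝ) < n := by exact_mod_cast hn0
    have hRV : 0 < RV T Z n := by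
      by_contra h
      push Not at h
      nlinarith
    have hid := key_id hT Z hn0
    set S := ∑ i ∈ Finset.range (n + 1), (dinc T Z n (i + 1) - dinc T Z n i) ^ 2 with hS
    have hS0 : 0 ≤ S := by positivity
    have e : Rratio T Z n - 2 = -(S / (2 * RV T Z n)) := by
      rw [Rratio, if_neg hRV.ne', show RV2 T Z n = 2 * RV T Z n - 1 / 2 * S by linarith]
      field_simp
      ring
    rw [Real.dist_eq, e, abs_neg, abs_of_nonneg (by positivity),
      div_le_div_iff₀ (by positivity) (by positivity)]
    nlinarith

end
end

section
/- Let T > 0, let m ≥ 1 be an integer, let 0 < t_1 < t_2 < … < t_m ≤ T and let c_1, …, c_m be nonzero reals, and define the pure-jump (piecewise constant) path Z(t) := Σ_{k=1}^m c_k · 1_{t ≥ t_k}. Then RV^n_T(Z) → Σ_{k=1}^m c_k² and R_n(Z) → 1 as n → ∞ (equivalently, ρ_n(Z) → 0). In particular, the path of a pure-jump function with at least one jump on (0, T] is not rough. -/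
open Filter

noncomputable section

def DD {m : ℕ} (N : Fin m → ℤ) (c : Fin m → ℝ) (i : ℤ) : ℝ :=
  ∑ k : Fin m, if N k = i then c k else 0

def WW {m : ℕ} (N : Fin m → ℤ) (c : Fin m → ℝ) (i : ℤ) : ℝ :=
  ∑ k : Fin m, if N k ≤ i then c k else 0

lemma WW_sub {m : ℕ} (N : Fin m → ℤ) (c : Fin m → ℝ) (i : ℤ) :
    WW N c i - WW N c (i - 1) = DD N c i := by
  unfold WW DD
  rw [← Finset.sum_sub_distrib]
  refine Finset.sum_congr rfl fun k _ => ?_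
  split_ifs <;> first | omega | simp

lemma DD_cross {m : ℕ} (N : Fin m → ℤ) (c : Fin m → ℝ)
    (hN : ∀ j k, j < k → N j + 2 ≤ N k) (i : ℤ) :
    DD N c (i + 1) * DD N c i = 0 := by
  unfold DD
  rw [Finset.sum_mul_sum]
  refine Finset.sum_eq_zero fun j _ => Finset.sum_eq_zero fun k _ => ?_
  split_ifs with h1 h2
  · exfalso
    rcases lt_trichotomy j k with h | h | h
    · have := hN _ _ h; omega
    · subst h; omega
    · have := hN _ _ h; omega
  all_goals simp

lemma DD_sq {m : ℕ} (N : Fin m → ℤ) (c : Fin m → ℝ)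
    (hN : ∀ j k, j < k → N j + 2 ≤ N k) (i : ℤ) :
    DD N c i ^ 2 = ∑ k : Fin m, if N k = i then c k ^ 2 else 0 := by
  unfold DD
  rw [sq, Finset.sum_mul_sum]
  refine Finset.sum_congr rfl fun j _ => ?_
  rw [Finset.sum_eq_single j]
  · split_ifs
    · ring
    · ring
  · intro k _ hk
    split_ifs with h1 h2
    · exfalso
      rcases lt_or_gt_of_ne hk with h | h
      · have := hN _ _ h; omega
      · have := hN _ _ h; omega
    all_goals simp
  · simp

lemma DD_sum {m : ℕ} (N : Fin m → ℤ) (c : Fin m → ℝ)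
    (hN : ∀ j k, j < k → N j + 2 ≤ N k) (S : Finset ℕ) (e : ℕ → ℤ)
    (he : Function.Injective e) (hS : ∀ k, ∃ i ∈ S, N k = e i) :
    ∑ i ∈ S, DD N c (e i) ^ 2 = ∑ k, c k ^ 2 := by
  simp_rw [DD_sq N c hN]
  rw [Finset.sum_comm]
  refine Finset.sum_congr rfl fun k _ => ?_
  obtain ⟨i, hi, h⟩ := hS k
  rw [Finset.sum_eq_single i]
  · simp [h]
  · intro b _ hb
    rw [if_neg]
    intro h'
    exact hb (he (h'.symm.trans h))
  · intro h'; exact absurd hi h'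

lemma core (T : ℝ) (hT : 0 < T) (m : ℕ) (t : Fin m → ℝ) (c : Fin m → ℝ)
    (ht0 : ∀ k, 0 < t k) (htT : ∀ k, t k ≤ T)
    (Z : ℝ → ℝ) (hZ : Z = fun s => ∑ k : Fin m, if t k ≤ s then c k else 0)
    (n : ℕ) (hn : 0 < n) (hgap : ∀ j k, j < k → 2 * T / n ≤ t k - t j) :
    RV T Z n = ∑ k, c k ^ 2 ∧ RV2 T Z n = ∑ k, c k ^ 2 ∧ crossSum T Z n = 0 := by
  have hn' : (0 : ℝ) < n := by exact_mod_cast hn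
  have hext : ∀ x, Zext T Z x = ∑ k : Fin m, if t k ≤ x then c k else 0 := by
    intro x
    unfold Zext
    rw [hZ]
    split_ifs with h1 h2
    · refine Finset.sum_congr rfl fun k _ => ?_
      rw [if_neg (by linarith [ht0 k]), if_neg (by linarith [ht0 k])]
    · refine Finset.sum_congr rfl fun k _ => ?_
      rw [if_pos (by linarith [htT k]), if_pos (by linarith [htT k])]
    · rfl
  set N : Fin m → ℤ := fun k => ⌈t k * n / T⌉ with hNdef
  have hW : ∀ i : ℤ, Zext T Z ((i : ℝ) * T / n) = WW N c i := by
    intro i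
    rw [hext]
    refine Finset.sum_congr rfl fun k _ => ?_
    have : t k ≤ (i : ℝ) * T / n ↔ N k ≤ i := by
      rw [hNdef]; simp only
      rw [Int.ceil_le, le_div_iff₀ hn', div_le_iff₀ hT]
    simp only [this]
  have hN : ∀ j k, j < k → N j + 2 ≤ N k := by
    intro j k hjk
    have h := hgap j k hjk
    rw [hNdef]; simp only
    rw [← Int.ceil_add_ofNat]
    apply Int.ceil_le_ceil
    rw [div_le_iff₀ hn'] at h
    rw [div_add' _ _ _ hT.ne']
    apply div_le_div_of_nonneg_right _ hT.le
    have : ((OfNat.ofNat 2 : ℤ) : ℝ) = 2 := by norm_num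
    linarith
  have hN1 : ∀ k, 1 ≤ N k := by
    intro k
    have : 0 < N k := Int.ceil_pos.mpr (by have := ht0 k; positivity)
    omega
  have hNn : ∀ k, N k ≤ n := by
    intro k
    rw [hNdef]; simp only
    rw [Int.ceil_le, div_le_iff₀ hT]
    push_cast
    nlinarith [htT k]
  have e0 : ∀ i : ℕ, Zext T Z ((i : ℝ) * T / n) = WW N c i := fun i => by
    rw [← hW]; push_cast; rfl
  have e1 : ∀ i : ℕ, Zext T Z (((i : ℝ) + 1) * T / n) = WW N c (i + 1) := fun i => by
    rw [← hW]; push_cast; rfl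
  have e2 : ∀ i : ℕ, Zext T Z (((i : ℝ) - 1) * T / n) = WW N c (i - 1) := fun i => by
    rw [← hW]; push_cast; rfl
  have d1 : ∀ i : ℕ, WW N c ((i : ℤ) + 1) - WW N c i = DD N c (i + 1) := fun i => by
    rw [← WW_sub]; simp
  refine ⟨?_, ?_, ?_⟩
  · unfold RV
    simp_rw [e0, e2, WW_sub]
    refine DD_sum N c hN _ (fun i => (i : ℤ)) (fun a b h => by simpa using h) fun k => ?_
    have := hN1 k; have := hNn k
    exact ⟨(N k).toNat, by rw [Finset.mem_Icc]; omega, by omega⟩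
  · unfold RV2
    simp_rw [e1, e2]
    have h1 := DD_sum N c hN (Finset.range (n + 1)) (fun i => (i : ℤ))
      (fun a b h => by simpa using h) fun k => by
        have := hN1 k; have := hNn k
        exact ⟨(N k).toNat, by rw [Finset.mem_range]; omega, by omega⟩
    have h2 := DD_sum N c hN (Finset.range (n + 1)) (fun i => (i : ℤ) + 1)
      (fun a b h => by simpa using h) fun k => by
        have := hN1 k; have := hNn k
        exact ⟨(N k - 1).toNat, by rw [Finset.mem_range]; omega, by omega⟩
    have h3 : ∀ i : ℕ, (WW N c ((i : ℤ) + 1) - WW N c ((i : ℤ) - 1)) ^ 2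
        = DD N c i ^ 2 + DD N c (i + 1) ^ 2 := fun i => by
      have a := d1 i
      have b := WW_sub N c (i : ℤ)
      have e := DD_cross N c hN (i : ℤ)
      have : WW N c ((i : ℤ) + 1) - WW N c ((i : ℤ) - 1) = DD N c i + DD N c (i + 1) := by
        linarith
      rw [this]
      linear_combination 2 * e
    simp_rw [h3]
    rw [Finset.sum_add_distrib, h1, h2]
    ring
  · unfold crossSum
    refine Finset.sum_eq_zero fun i _ => ?_
    rw [e0, e1, e2, WW_sub, d1, DD_cross N c hN]

/-- for a pure-jump (piecewise constant) path
`Z(t) = Σ_{k=1}^m c_k · 1_{t ≥ t_k}` with jump times `0 < t_1 < ⋯ < t_m ≤ T` and nonzero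
jump sizes `c_k`, one has `RV^n_T(Z) → Σ_k c_k²`, `R_n(Z) → 1` (equivalently `ρ_n(Z) → 0`);
in particular such a path is not rough. -/
theorem stmt4 (T : ℝ) (hT : 0 < T) (m : ℕ) (hm : 1 ≤ m)
    (t : Fin m → ℝ) (c : Fin m → ℝ)
    (ht0 : ∀ k, 0 < t k) (htT : ∀ k, t k ≤ T) (htmono : StrictMono t)
    (hc : ∀ k, c k ≠ 0)
    (Z : ℝ → ℝ) (hZ : Z = fun s => ∑ k : Fin m, if t k ≤ s then c k else 0) :
    Tendsto (fun n : ℕ => RV T Z n) atTop (nhds (∑ k : Fin m, (c k) ^ 2)) ∧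
    Tendsto (fun n : ℕ => Rratio T Z n) atTop (nhds 1) ∧
    Tendsto (fun n : ℕ => acf T Z n) atTop (nhds 0) ∧
    ¬ IsRough T Z := by
  have hpos : 0 < ∑ k, c k ^ 2 := by
    haveI : Nonempty (Fin m) := ⟨⟨0, hm⟩⟩
    exact Finset.sum_pos (fun k _ => by have := hc k; positivity) Finset.univ_nonempty
  have hev : ∀ᶠ n : ℕ in atTop,
      RV T Z n = ∑ k, c k ^ 2 ∧ RV2 T Z n = ∑ k, c k ^ 2 ∧ crossSum T Z n = 0 := by
    have hg : ∀ᶠ n : ℕ in atTop, ∀ j k, j < k → 2 * T / (n : ℝ) ≤ t k - t j := by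
      rw [eventually_all]; intro j
      rw [eventually_all]; intro k
      by_cases hjk : j < k
      · have h := (tendsto_const_div_atTop_nhds_zero_nat (2 * T)).eventually_le_const
          (sub_pos.mpr (htmono hjk))
        filter_upwards [h] with n hn _ using hn
      · exact Eventually.of_forall fun n h => absurd h hjk
    filter_upwards [hg, eventually_gt_atTop 0] with n h1 h2
    exact core T hT m t c ht0 htT Z hZ n h2 h1
  have hR : Tendsto (fun n : ℕ => Rratio T Z n) atTop (nhds 1) := by
    refine tendsto_const_nhds.congr' ?_
    filter_upwards [hev] with n h
    unfold Rratio
    rw [h.1, h.2.1, if_neg hpos.ne', div_self hpos.ne']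
  refine ⟨?_, hR, ?_, ?_⟩
  · refine tendsto_const_nhds.congr' ?_
    filter_upwards [hev] with n h using h.1.symm
  · refine tendsto_const_nhds.congr' ?_
    filter_upwards [hev] with n h
    unfold acf
    rw [h.1, h.2.2, if_neg hpos.ne', zero_div]
  · rintro ⟨τ, hτ, h⟩
    obtain ⟨ψ, hψ, hl⟩ := h id strictMono_id
    have h2 := hR.comp hψ.tendsto_atTop
    exact hτ.ne (tendsto_nhds_unique hl h2)

end
end

section
/- (Scaling bound for the fractional kernel, the key estimate in eq. (rough-mom).) Let H ∈ (0, 1/2), t ≥ 0 and Δ > 0. Then ∫_0^{t+Δ} ((t+Δ−s)_+^{H−1/2} − (t−s)_+^{H−1/2})² ds = Δ^{2H} · ∫_0^{(t+Δ)/Δ} (u^{H−1/2} − (u−1)_+^{H−1/2})² du, and hence ∫_0^{t+Δ} ((t+Δ−s)_+^{H−1/2} − (t−s)_+^{H−1/2})² ds ≤ Δ^{2H} · I_H. -/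
open MeasureTheory Set

noncomputable section

/-- The truncated power `x ↦ x₊^{H−1/2}`: equal to `x^{H−1/2}` (real power) for `x > 0`
and to `0` for `x ≤ 0`. -/
def pplus (H x : ℝ) : ℝ := if 0 < x then x ^ (H - 1 / 2) else 0

/-- The integral `I_H = ∫_0^∞ (s^{H−1/2} − (s−1)₊^{H−1/2})² ds`. -/
def IH (H : ℝ) : ℝ := ∫ s in Ioi (0 : ℝ), (pplus H s - pplus H (s - 1)) ^ 2

/-- The normalizing constant `K_H = Γ(H+1/2)/√(sin(πH)·Γ(2H+1))` of the fractional
kernel. -/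
def KH (H : ℝ) : ℝ :=
  Real.Gamma (H + 1 / 2) / Real.sqrt (Real.sin (Real.pi * H) * Real.Gamma (2 * H + 1))

lemma pplus_nonneg (H x : ℝ) : 0 ≤ pplus H x := by
  unfold pplus; split_ifs with h
  · exact Real.rpow_nonneg h.le _
  · exact le_rfl

lemma pplus_mul (H d u : ℝ) (hd : 0 < d) :
    pplus H (d * u) = d ^ (H - 1 / 2) * pplus H u := by
  unfold pplus
  by_cases hu : 0 < u
  · rw [if_pos hu, if_pos (mul_pos hd hu), Real.mul_rpow hd.le hu.le]
  · rw [if_neg hu, if_neg, mul_zero]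
    intro h
    exact hu ((mul_pos_iff_of_pos_left hd).1 h)

lemma pplus_measurable (H : ℝ) : Measurable (pplus H) := by
  unfold pplus
  exact Measurable.ite measurableSet_Ioi (by fun_prop) measurable_const

lemma pplus_sq (H x : ℝ) (hx : 0 < x) : pplus H x ^ 2 = x ^ (2 * H - 1) := by
  unfold pplus
  rw [if_pos hx, ← Real.rpow_natCast, ← Real.rpow_mul hx.le]
  congr 1; push_cast; ring

lemma pplus_anti (H x y : ℝ) (hH : H < 1 / 2) (hx : 0 < x) (hxy : x ≤ y) :
    pplus H y ≤ pplus H x := by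
  unfold pplus
  rw [if_pos hx, if_pos (hx.trans_le hxy)]
  exact Real.rpow_le_rpow_of_nonpos hx hxy (by linarith)

lemma pplus_tail (H u : ℝ) (hH0 : 0 < H) (hH : H < 1 / 2) (hu : 1 < u) :
    (pplus H u - pplus H (u - 1)) ^ 2 ≤ (u + (-1)) ^ (2 * H - 3) := by
  have h1 : 0 < u - 1 := by linarith
  have h0 : 0 < u := by linarith
  have hanti := pplus_anti H (u - 1) u hH h1 (by linarith)
  have key : pplus H (u - 1) - pplus H u ≤ (u - 1) ^ (H - 3 / 2) := by
    have hr0 : 0 < (u - 1) / u := by positivity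
    have hr1 : (u - 1) / u ≤ 1 := by rw [div_le_one h0]; linarith
    have hr : (u - 1) / u ≤ ((u - 1) / u) ^ (1 / 2 - H) := by
      conv_lhs => rw [← Real.rpow_one ((u - 1) / u)]
      exact Real.rpow_le_rpow_of_exponent_ge hr0 hr1 (by linarith)
    have e1 : u ^ (H - 1 / 2) = (u - 1) ^ (H - 1 / 2) * ((u - 1) / u) ^ (1 / 2 - H) := by
      rw [Real.div_rpow h1.le h0.le, show (1 / 2 - H) = -(H - 1 / 2) by ring,
        Real.rpow_neg h1.le, Real.rpow_neg h0.le]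
      have := (Real.rpow_pos_of_pos h1 (H - 1 / 2)).ne'
      field_simp
    have e2 : (u - 1) ^ (H - 3 / 2) = (u - 1) ^ (H - 1 / 2) * (u - 1)⁻¹ := by
      rw [← Real.rpow_neg_one, ← Real.rpow_add h1]; congr 1; ring
    unfold pplus
    rw [if_pos h0, if_pos h1, e1, e2]
    have hp := Real.rpow_pos_of_pos h1 (H - 1 / 2)
    have h3 : 1 - (u - 1) / u ≤ (u - 1)⁻¹ := by
      have : 1 - (u - 1) / u = u⁻¹ := by field_simp; ring
      rw [this]
      exact inv_anti₀ h1 (by linarith)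
    nlinarith
  have e3 : (u + (-1)) ^ (2 * H - 3) = ((u - 1) ^ (H - 3 / 2)) ^ 2 := by
    rw [← Real.rpow_natCast, ← Real.rpow_mul h1.le]
    congr 1; push_cast; ring
  rw [e3]
  nlinarith

lemma kernel_integrable (H : ℝ) (hH0 : 0 < H) (hH : H < 1 / 2) :
    IntegrableOn (fun u => (pplus H u - pplus H (u - 1)) ^ 2) (Ioi (0 : ℝ)) := by
  have hm : Measurable (fun u => (pplus H u - pplus H (u - 1)) ^ 2) :=
    ((pplus_measurable H).sub
      ((pplus_measurable H).comp (measurable_id.sub_const 1))).pow_const 2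
  have i0 : IntervalIntegrable (fun u : ℝ => u ^ (2 * H - 1)) volume 0 1 :=
    intervalIntegral.intervalIntegrable_rpow' (by linarith)
  have A : IntegrableOn (fun u => (pplus H u - pplus H (u - 1)) ^ 2) (Ioc (0 : ℝ) 1) := by
    have := (intervalIntegrable_iff_integrableOn_Ioc_of_le zero_le_one).1 i0
    refine this.congr_fun (fun u hu => ?_) measurableSet_Ioc
    have : pplus H (u - 1) = 0 := by
      unfold pplus; rw [if_neg]; linarith [hu.2]
    simp only [this, sub_zero, pplus_sq H u hu.1]
  have B : IntegrableOn (fun u => (pplus H u - pplus H (u - 1)) ^ 2) (Ioc (1 : ℝ) 2) := by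
    have i1 := i0.comp_sub_right 1
    norm_num at i1
    have := (intervalIntegrable_iff_integrableOn_Ioc_of_le (by norm_num)).1 i1
    refine Integrable.mono' this hm.aestronglyMeasurable ?_
    refine (ae_restrict_iff' measurableSet_Ioc).2 (Filter.Eventually.of_forall fun u hu => ?_)
    have h1 : 0 < u - 1 := by linarith [hu.1]
    rw [Real.norm_of_nonneg (sq_nonneg _), ← pplus_sq H (u - 1) h1]
    nlinarith [pplus_anti H (u - 1) u hH h1 (by linarith), pplus_nonneg H u,
      pplus_nonneg H (u - 1)]
  have C : IntegrableOn (fun u => (pplus H u - pplus H (u - 1)) ^ 2) (Ioi (2 : ℝ)) := by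
    have := integrableOn_add_rpow_Ioi_of_lt (a := 2 * H - 3) (c := 2) (m := -1)
      (by linarith) (by norm_num)
    refine Integrable.mono' this hm.aestronglyMeasurable ?_
    refine (ae_restrict_iff' measurableSet_Ioi).2 (Filter.Eventually.of_forall fun u hu => ?_)
    have hu' : (2 : ℝ) < u := hu
    rw [Real.norm_of_nonneg (sq_nonneg _)]
    exact pplus_tail H u hH0 hH (by linarith)
  have D := (A.union B).union C
  rwa [Ioc_union_Ioc_eq_Ioc zero_le_one one_le_two, Ioc_union_Ioi_eq_Ioi zero_le_two] at D

/-- scaling bound for the fractional kernel, key estimate in eq. (rough-mom):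
for `H ∈ (0, 1/2)`, `t ≥ 0` and `Δ > 0`,
`∫_0^{t+Δ} ((t+Δ−s)₊^{H−1/2} − (t−s)₊^{H−1/2})² ds
  = Δ^{2H} · ∫_0^{(t+Δ)/Δ} (u^{H−1/2} − (u−1)₊^{H−1/2})² du ≤ Δ^{2H} · I_H`. -/
theorem stmt10 (H : ℝ) (hH0 : 0 < H) (hH : H < 1 / 2) (t : ℝ) (ht : 0 ≤ t)
    (Δ : ℝ) (hΔ : 0 < Δ) :
    (∫ s in Ioc (0 : ℝ) (t + Δ), (pplus H (t + Δ - s) - pplus H (t - s)) ^ 2) =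
      Δ ^ (2 * H) *
        ∫ u in Ioc (0 : ℝ) ((t + Δ) / Δ), (pplus H u - pplus H (u - 1)) ^ 2 ∧
    (∫ s in Ioc (0 : ℝ) (t + Δ), (pplus H (t + Δ - s) - pplus H (t - s)) ^ 2) ≤
      Δ ^ (2 * H) * IH H := by
  have h1 : (∫ s in Ioc (0 : ℝ) (t + Δ), (pplus H (t + Δ - s) - pplus H (t - s)) ^ 2) =
      Δ ^ (2 * H) *
        ∫ u in Ioc (0 : ℝ) ((t + Δ) / Δ), (pplus H u - pplus H (u - 1)) ^ 2 := by
    have hT : 0 ≤ t + Δ := by linarith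
    rw [← intervalIntegral.integral_of_le hT,
      ← intervalIntegral.integral_of_le (div_nonneg hT hΔ.le)]
    have hpt : ∀ s : ℝ, (pplus H (t + Δ - s) - pplus H (t - s)) ^ 2 = Δ ^ (2 * H - 1) *
        (fun u => (pplus H u - pplus H (u - 1)) ^ 2) ((t + Δ) / Δ - s / Δ) := by
      intro s
      have a1 : t + Δ - s = Δ * ((t + Δ) / Δ - s / Δ) := by field_simp
      have a2 : t - s = Δ * ((t + Δ) / Δ - s / Δ - 1) := by field_simp; ring
      have a3 : Δ ^ (2 * H - 1) = (Δ ^ (H - 1 / 2)) ^ 2 := by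
        rw [← Real.rpow_natCast, ← Real.rpow_mul hΔ.le]
        congr 1; push_cast; ring
      rw [a1, a2, pplus_mul H Δ _ hΔ, pplus_mul H Δ _ hΔ, a3]
      ring
    simp_rw [hpt]
    rw [intervalIntegral.integral_const_mul,
      intervalIntegral.integral_comp_sub_div (fun u => (pplus H u - pplus H (u - 1)) ^ 2) hΔ.ne']
    have a4 : Δ ^ (2 * H) = Δ ^ (2 * H - 1) * Δ := by
      rw [Real.rpow_sub_one hΔ.ne']; field_simp
    rw [a4, sub_self, zero_div, sub_zero, smul_eq_mul, mul_assoc]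
  refine ⟨h1, ?_⟩
  rw [h1]
  refine mul_le_mul_of_nonneg_left ?_ (Real.rpow_nonneg hΔ.le _)
  unfold IH
  exact setIntegral_mono_set (kernel_integrable H hH0 hH)
    (Filter.Eventually.of_forall fun _ => sq_nonneg _)
    (HasSubset.Subset.eventuallyLE Ioc_subset_Ioi_self)

end
end
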